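/- For every satisfiable 3-SAT instance φ and every integer h > 1, the graph G = reduction(φ,h) admits a tree 7-spanner T that is a breadth-first-search tree of G rooted at the central vertex v of the initial path, i.e., every vertex u ≠ v of G is adjacent in T to some vertex at G-distance d_G(v,u) − 1 from v. -/

import Mathlib

/-!
Both attachment vertices `v_⊕^b`, `v_⊖^b` of a block `b` lie at distance `2 + 2 * b.length` from
the centre, so the variable and occurrence vertices of `b` lie one level below them and the
vertices `q_{l,c}^b` two levels below (`depth`); every edge of `G` joins consecutive levels
(`depth_of_baseAdj`).

Fix a satisfying assignment `a` and define a tree by a parent function `par`: `x^b` hangs from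
`v_⊕^b` or `v_⊖^b` according to `a x`, each `x_c^b` hangs from its only neighbour one level up,
and all `q_{l,c}^b` of a clause `c` hang from `x^b` or `x_c^b`, where `x` is a variable whose
literal in `c` is true under `a` (the rows of `M` for `x` and `x_c` are complementary, so one
of the two is always adjacent to `q_{l,c}^b`). As the literal is true, `x^b` and `x_c^b` have the
same parent; hence all `q_{l,c}^b` of the clause have a common grandparent
(`par_par_q`). In particular `v_⊕^b` and `v_⊖^b` are always at tree distance at most `4`.

The edges outside the tree are therefore spanned cheaply: an edge from `x^b` to `v_⊕^b` or
`v_⊖^b` by at most `1 + 4`, an edge from `q_{l,c}^b` to `x^b` or `x_c^b` by at most `2 + 4 + 1 = 7`.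
Bounding the tree distance on edges of `G` bounds it on all pairs (`dist_le_of_adj`). Since parents
are one level closer to the centre, the tree is a breadth-first-search tree.
-/

open SimpleGraph

/-- A 3-SAT clause on Boolean variables indexed by naturals: variables `v1,v2,v3`
with polarities `p1,p2,p3` (`true` = the variable appears positively). -/
structure Clause3 where
  v1 : ℕ
  v2 : ℕ
  v3 : ℕ
  p1 : Bool
  p2 : Bool
  p3 : Bool
deriving DecidableEq

/-- A 3-SAT instance: a nonempty finite set of clauses, each on 3 distinct variables. -/
structure SAT3 where
  clauses : Finset Clause3
  nonempty : clauses.Nonempty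
  distinct : ∀ c ∈ clauses, c.v1 ≠ c.v2 ∧ c.v1 ≠ c.v3 ∧ c.v2 ≠ c.v3

/-- The variables of a 3-SAT instance. -/
def SAT3.vars (φ : SAT3) : Finset ℕ :=
  φ.clauses.biUnion (fun c => {c.v1, c.v2, c.v3})

/-- A truth assignment satisfies a clause if some literal is made true. -/
def Clause3.satisfiedBy (c : Clause3) (a : ℕ → Bool) : Prop :=
  a c.v1 = c.p1 ∨ a c.v2 = c.p2 ∨ a c.v3 = c.p3

/-- A truth assignment satisfies an instance if it satisfies every clause. -/
def SAT3.satisfiedBy (φ : SAT3) (a : ℕ → Bool) : Prop :=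
  ∀ c ∈ φ.clauses, c.satisfiedBy a

/-- `x` is one of the three variables of clause `c`. -/
def Clause3.hasVar (c : Clause3) (x : ℕ) : Prop :=
  x = c.v1 ∨ x = c.v2 ∨ x = c.v3

/-- The 6 × 8 matrix `M` of the construction. -/
def Mmat : Fin 6 → Fin 8 → Bool :=
  ![![true, true, true, true, false, false, false, false],
    ![false, false, false, false, true, true, true, true],
    ![true, true, false, false, true, true, false, false],
    ![false, false, true, true, false, false, true, true],
    ![true, false, true, false, true, false, true, false],
    ![false, true, false, true, false, true, false, true]]

/-- The address of a building block: the (clause, index `r`) choices along the chain of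
attachments leading from the root block `G^{1,1}` (address `[]`) to this block; the head of
the list is the most recent attachment.  A block of address `b` lies in layer `b.length + 1`. -/
abbrev BlockAddr : Type := List (Clause3 × Fin 7)

/-- The ambient vertices of the reduction graph: the five vertices `q1, p1, v, p2, q2` of the
initial path, and for each building block address `b`: the variable vertices `x^b`, the
clause-occurrence vertices `x_c^b`, and the vertices `q_{r,c}^b`.  The vertices
`v_⊕^b, v_⊖^b` of a block are identified with vertices of its parent (see `vplus`, `vminus`). -/
inductive RVert where
  | qp : RVert
  | pp : RVert
  | vv : RVert
  | pm : RVert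
  | qm : RVert
  | var : BlockAddr → ℕ → RVert
  | varC : BlockAddr → Clause3 → ℕ → RVert
  | q : BlockAddr → Clause3 → Fin 8 → RVert

/-- The vertex `v_⊕` of the block with address `b` (an identified vertex of the parent). -/
def vplus : BlockAddr → RVert
  | [] => RVert.qp
  | (c, r) :: b => RVert.q b c r.castSucc

/-- The vertex `v_⊖` of the block with address `b` (an identified vertex of the parent). -/
def vminus : BlockAddr → RVert
  | [] => RVert.qm
  | (c, r) :: b => RVert.q b c r.succ

/-- The group of six vertices `g = (y^b, y_c^b, z^b, z_c^b, w^b, w_c^b)` for clause `c`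
with variables `y,z,w` in block `b`. -/
def gvec (b : BlockAddr) (c : Clause3) : Fin 6 → RVert :=
  ![RVert.var b c.v1, RVert.varC b c c.v1,
    RVert.var b c.v2, RVert.varC b c c.v2,
    RVert.var b c.v3, RVert.varC b c c.v3]

/-- The block with address `b` is present in `reduction(φ, h)`. -/
def validBlock (φ : SAT3) (h : ℕ) (b : BlockAddr) : Prop :=
  b.length + 1 ≤ h ∧ ∀ p ∈ b, p.1 ∈ φ.clauses

/-- The vertices of `reduction(φ, h)` among the ambient vertices. -/
def validVert (φ : SAT3) (h : ℕ) : RVert → Prop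
  | RVert.qp => True
  | RVert.pp => True
  | RVert.vv => True
  | RVert.pm => True
  | RVert.qm => True
  | RVert.var b x => validBlock φ h b ∧ x ∈ φ.vars
  | RVert.varC b c x => validBlock φ h b ∧ c ∈ φ.clauses ∧ c.hasVar x
  | RVert.q b c _ => validBlock φ h b ∧ c ∈ φ.clauses

/-- The edges of the reduction graph (to be symmetrized): the 4 path edges; the edges
`x^b v_⊕^b`, `x^b v_⊖^b`; the edges between the group of six and the `q` vertices given by
the matrix `M`; and the polarity edges, joining `x_c^b` to `v_⊕^b` when `x` occurs
positively in `c` and to `v_⊖^b` otherwise. -/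
def baseAdj (u w : RVert) : Prop :=
  (u = RVert.qp ∧ w = RVert.pp) ∨
  (u = RVert.pp ∧ w = RVert.vv) ∨
  (u = RVert.vv ∧ w = RVert.pm) ∨
  (u = RVert.pm ∧ w = RVert.qm) ∨
  (∃ b x, u = RVert.var b x ∧ (w = vplus b ∨ w = vminus b)) ∨
  (∃ b c k l, Mmat k l = true ∧ u = gvec b c k ∧ w = RVert.q b c l) ∨
  (∃ (b : BlockAddr) (c : Clause3),
    (u = RVert.varC b c c.v1 ∧ w = (if c.p1 then vplus b else vminus b)) ∨
    (u = RVert.varC b c c.v2 ∧ w = (if c.p2 then vplus b else vminus b)) ∨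
    (u = RVert.varC b c c.v3 ∧ w = (if c.p3 then vplus b else vminus b)))

/-- The vertex type of the graph `reduction(φ, h)`. -/
abbrev RedVert (φ : SAT3) (h : ℕ) : Type := {x : RVert // validVert φ h x}

/-- The graph `G = reduction(φ, h)` of the construction. -/
def reductionGraph (φ : SAT3) (h : ℕ) : SimpleGraph (RedVert φ h) :=
  SimpleGraph.comap Subtype.val (SimpleGraph.fromRel baseAdj)

/-- The central vertex `v` of the initial path of `reduction(φ, h)`. -/
def centralVert (φ : SAT3) (h : ℕ) : RedVert φ h := ⟨RVert.vv, trivial⟩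

/-- `T` is a tree `t`-spanner of `G`: a spanning tree of `G` all whose distances are within a
factor `t` of those of `G`. -/
def IsTreeSpanner {V : Type*} (G T : SimpleGraph V) (t : ℕ) : Prop :=
  T ≤ G ∧ T.IsTree ∧ ∀ u w : V, T.dist u w ≤ t * G.dist u w

/-- A spanning tree `T` of `G` is `v`-concentrated if for every `i ≥ 0` the subgraph of `T`
induced by the ball `N_G^i[v]` is connected. -/
def IsConcentrated {V : Type*} (G T : SimpleGraph V) (v : V) : Prop :=
  ∀ i : ℕ, (T.induce {x : V | G.dist v x ≤ i}).Connected

/-! ### Spanning trees given by a parent function -/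

section ParentTree

variable {V : Type*}

/-- The graph joining each vertex `u` to its parent `P u`. A root is encoded by `P r = r`,
which contributes no edge because `SimpleGraph.fromRel` drops loops. -/
def parentGraph (P : V → V) : SimpleGraph V := SimpleGraph.fromRel (fun u w => P u = w)

variable {P : V → V} {D : V → ℕ} {r : V}

lemma parentGraph_adj (hD : ∀ u, u ≠ r → D (P u) + 1 = D u) {u : V} (hu : u ≠ r) :
    (parentGraph P).Adj u (P u) := by
  refine (SimpleGraph.fromRel_adj _ _ _).2 ⟨fun e => ?_, Or.inl rfl⟩
  have := hD u hu
  rw [← e] at this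
  omega

lemma exists_walk_parentGraph (hD : ∀ u, u ≠ r → D (P u) + 1 = D u) (n : ℕ) :
    ∀ u, D u = n → ∃ p : (parentGraph P).Walk u r, p.length ≤ n := by
  induction n with
  | zero =>
    intro u hu
    by_cases h : u = r
    · subst h
      exact ⟨.nil, by simp⟩
    · have := hD u h
      omega
  | succ n ih =>
    intro u hu
    by_cases h : u = r
    · subst h
      exact ⟨.nil, by simp⟩
    · obtain ⟨p, hp⟩ := ih (P u) (by have := hD u h; omega)
      exact ⟨.cons (parentGraph_adj hD h) p, by simpa using hp⟩

lemma parentGraph_connected (hD : ∀ u, u ≠ r → D (P u) + 1 = D u) :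
    (parentGraph P).Connected := by
  have key : ∀ u, (parentGraph P).Reachable u r := fun u => by
    obtain ⟨p, -⟩ := exists_walk_parentGraph hD _ u rfl
    exact ⟨p⟩
  have : Nonempty V := ⟨r⟩
  exact ⟨fun u w => (key u).trans (key w).symm⟩

lemma D_iterate_le (hr : P r = r) (hD : ∀ u, u ≠ r → D (P u) + 1 = D u) (n : ℕ) (u : V) :
    D (P^[n] u) ≤ D u := by
  induction n generalizing u with
  | zero => simp
  | succ n ih =>
    rw [Function.iterate_succ_apply]
    refine (ih _).trans ?_
    by_cases h : u = r
    · rw [h, hr]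
    · have := hD u h
      omega

/-- Deleting the edge from `u` to `P u` separates the descendants of `u` from the other vertices,
so every edge of a parent graph is a bridge. -/
lemma parentGraph_not_reachable (hr : P r = r) (hD : ∀ u, u ≠ r → D (P u) + 1 = D u)
    {u : V} (hu : u ≠ r) :
    ¬ ((parentGraph P).deleteEdges {s(u, P u)}).Reachable u (P u) := by
  have up : ∀ w, w ≠ u → (∃ n, P^[n] w = u) → ∃ n, P^[n] (P w) = u := by
    rintro w hw ⟨n, hn⟩
    cases n with
    | zero => exact absurd hn hw
    | succ n => exact ⟨n, by rwa [Function.iterate_succ_apply] at hn⟩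
  have down : ∀ w, (∃ n, P^[n] (P w) = u) → ∃ n, P^[n] w = u := by
    rintro w ⟨n, hn⟩
    exact ⟨n + 1, by rwa [Function.iterate_succ_apply]⟩
  have key : ∀ x y, ((parentGraph P).deleteEdges {s(u, P u)}).Walk x y →
      (∃ n, P^[n] x = u) → ∃ n, P^[n] y = u := by
    intro x y p
    induction p with
    | nil => exact id
    | @cons x y z hxy _ ih =>
      intro hx
      apply ih
      rw [SimpleGraph.deleteEdges_adj] at hxy
      obtain ⟨h1, h2⟩ := hxy
      rcases ((SimpleGraph.fromRel_adj _ _ _).1 h1).2 with e | e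
      · subst e
        refine up x ?_ hx
        rintro rfl
        exact h2 rfl
      · subst e
        exact down y hx
  rintro ⟨p⟩
  obtain ⟨n, hn⟩ := key _ _ p ⟨0, rfl⟩
  have h1 := D_iterate_le hr hD n (P u)
  rw [hn] at h1
  have := hD u hu
  omega

lemma parentGraph_isTree (hr : P r = r) (hD : ∀ u, u ≠ r → D (P u) + 1 = D u) :
    (parentGraph P).IsTree := by
  refine ⟨parentGraph_connected hD, ?_⟩
  rw [SimpleGraph.isAcyclic_iff_forall_adj_isBridge]
  have key : ∀ u w, u ≠ w → P u = w → (parentGraph P).IsBridge s(u, w) := by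
    rintro u w huw rfl
    rw [SimpleGraph.isBridge_iff]
    refine parentGraph_not_reachable hr hD ?_
    rintro rfl
    exact huw hr.symm
  intro u w huw
  obtain ⟨hne, e | e⟩ := (SimpleGraph.fromRel_adj _ _ _).1 huw
  · exact key u w hne e
  · rw [Sym2.eq_swap]
    exact key w u hne.symm e

lemma parentGraph_dist_le_one (hr : P r = r) (hD : ∀ u, u ≠ r → D (P u) + 1 = D u) (u : V) :
    (parentGraph P).dist u (P u) ≤ 1 := by
  by_cases h : u = r
  · rw [h, hr]
    simp
  · exact (SimpleGraph.dist_eq_one_iff_adj.2 (parentGraph_adj hD h)).le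

lemma parentGraph_dist_le_two (hr : P r = r) (hD : ∀ u, u ≠ r → D (P u) + 1 = D u) (u : V) :
    (parentGraph P).dist u (P (P u)) ≤ 2 := by
  have h1 := parentGraph_dist_le_one hr hD u
  have h2 := parentGraph_dist_le_one hr hD (P u)
  have := (parentGraph_connected hD).dist_triangle (u := u) (v := P u) (w := P (P u))
  omega

lemma parentGraph_dist_le_four (hr : P r = r) (hD : ∀ u, u ≠ r → D (P u) + 1 = D u) {u w : V}
    (e : P (P u) = P (P w)) : (parentGraph P).dist u w ≤ 4 := by
  have h1 := parentGraph_dist_le_two hr hD u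
  have h2 := parentGraph_dist_le_two hr hD w
  rw [← e, SimpleGraph.dist_comm] at h2
  have := (parentGraph_connected hD).dist_triangle (u := u) (v := P (P u)) (w := w)
  omega

/-- If `D` changes by at most one along edges of `G` and parents are neighbours in `G`, then `D` is
the `G`-distance to the root. -/
lemma dist_eq_D {G : SimpleGraph V} (hle : parentGraph P ≤ G) (hr0 : D r = 0)
    (hD : ∀ u, u ≠ r → D (P u) + 1 = D u)
    (hadj : ∀ u w, G.Adj u w → D u ≤ D w + 1) (u : V) : G.dist r u = D u := by
  have key : ∀ x y (p : G.Walk x y), D x ≤ D y + p.length := by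
    intro x y p
    induction p with
    | nil => simp
    | cons hxy _ ih =>
      have := hadj _ _ hxy
      rw [SimpleGraph.Walk.length_cons]
      omega
  rw [SimpleGraph.dist_comm]
  apply le_antisymm
  · obtain ⟨p, hp⟩ := exists_walk_parentGraph hD _ u rfl
    have := SimpleGraph.dist_le (p.mapLe hle)
    simp only [SimpleGraph.Walk.length_map, SimpleGraph.Walk.mapLe] at this
    omega
  · obtain ⟨p, hp⟩ :=
      (((parentGraph_connected hD).mono hle).preconnected u r).exists_walk_length_eq_dist
    have := key _ _ p
    omega

lemma dist_le_of_adj {G T : SimpleGraph V} (hT : T.Connected) (hle : T ≤ G) (t : ℕ)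
    (hadj : ∀ u w, G.Adj u w → T.dist u w ≤ t) (u w : V) : T.dist u w ≤ t * G.dist u w := by
  have key : ∀ x y (p : G.Walk x y), T.dist x y ≤ t * p.length := by
    intro x y p
    induction p with
    | nil => simp
    | @cons x y z hxy p ih =>
      have h1 := hadj _ _ hxy
      have h2 := hT.dist_triangle (u := x) (v := y) (w := z)
      rw [SimpleGraph.Walk.length_cons, mul_add, mul_one]
      omega
  obtain ⟨p, hp⟩ := ((hT.mono hle).preconnected u w).exists_walk_length_eq_dist
  rw [← hp]
  exact key _ _ p

end ParentTree

/-! ### The levels and the parent function of the reduction graph -/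

/-- The distance of a vertex from the central vertex. -/
def depth : RVert → ℕ
  | RVert.vv => 0
  | RVert.pp => 1
  | RVert.pm => 1
  | RVert.qp => 2
  | RVert.qm => 2
  | RVert.var b _ => 2 * b.length + 3
  | RVert.varC b _ _ => 2 * b.length + 3
  | RVert.q b _ _ => 2 * b.length + 4

/-- The attachment vertex `v_⊕` (for `true`) or `v_⊖` (for `false`) of a block. -/
def side (b : BlockAddr) (s : Bool) : RVert := if s then vplus b else vminus b

/-- The polarity of the variable `x` in the clause `c`; only meaningful when `x` occurs in `c`. -/
def pol (c : Clause3) (x : ℕ) : Bool :=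
  if x = c.v1 then c.p1 else if x = c.v2 then c.p2 else c.p3

/-- The position in `gvec` of the parent of `q_{l,c}`: the vertex adjacent to `q_{l,c}` among `x`
and `x_c`, where `x` is the first variable whose literal in `c` is true under `a`. -/
def pick (a : ℕ → Bool) (c : Clause3) (l : Fin 8) : Fin 6 :=
  if a c.v1 = c.p1 then (if Mmat 0 l then 0 else 1)
  else if a c.v2 = c.p2 then (if Mmat 2 l then 2 else 3)
  else (if Mmat 4 l then 4 else 5)

/-- The polarity of the first literal of `c` that is true under `a`, assuming there is one. -/
def sel (a : ℕ → Bool) (c : Clause3) : Bool :=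
  if a c.v1 = c.p1 then c.p1 else if a c.v2 = c.p2 then c.p2 else c.p3

/-- The parent of a vertex in the tree determined by the assignment `a`; the central vertex is its
own parent. -/
def par (a : ℕ → Bool) : RVert → RVert
  | RVert.vv => RVert.vv
  | RVert.pp => RVert.vv
  | RVert.pm => RVert.vv
  | RVert.qp => RVert.pp
  | RVert.qm => RVert.pm
  | RVert.var b x => side b (a x)
  | RVert.varC b c x => side b (pol c x)
  | RVert.q b c l => gvec b c (pick a c l)

lemma depth_side (b : BlockAddr) (s : Bool) : depth (side b s) = 2 * b.length + 2 := by
  rcases b with _ | ⟨⟨c, r⟩, b⟩ <;> cases s <;> simp [side, vplus, vminus, depth] <;> ring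

lemma depth_gvec (b : BlockAddr) (c : Clause3) (k : Fin 6) :
    depth (gvec b c k) = 2 * b.length + 3 := by
  fin_cases k <;> rfl

lemma depth_par (a : ℕ → Bool) {u : RVert} (hu : u ≠ RVert.vv) :
    depth (par a u) + 1 = depth u := by
  cases u with
  | vv => exact absurd rfl hu
  | var b x => rw [par, depth_side, depth]
  | varC b c x => rw [par, depth_side, depth]
  | q b c l => rw [par, depth_gvec, depth]
  | _ => rfl

lemma depth_of_baseAdj {u w : RVert} (e : baseAdj u w) :
    depth u = depth w + 1 ∨ depth w = depth u + 1 := by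
  rcases e with ⟨rfl, rfl⟩ | ⟨rfl, rfl⟩ | ⟨rfl, rfl⟩ | ⟨rfl, rfl⟩ | ⟨b, x, rfl, hw⟩ |
    ⟨b, c, k, l, -, rfl, rfl⟩ | ⟨b, c, ⟨rfl, hw⟩ | ⟨rfl, hw⟩ | ⟨rfl, hw⟩⟩
  · simp [depth]
  · simp [depth]
  · simp [depth]
  · simp [depth]
  · have h1 := depth_side b true
    have h2 := depth_side b false
    rcases hw with rfl | rfl <;> simp_all [side, depth]
  · rw [depth_gvec]
    exact Or.inr rfl
  all_goals
    change w = side b _ at hw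
    subst hw
    rw [depth_side]
    exact Or.inl rfl

lemma Mmat_pick (a : ℕ → Bool) (c : Clause3) (l : Fin 8) : Mmat (pick a c l) l = true := by
  unfold pick
  split_ifs <;> revert l <;> decide

section Valid

variable {φ : SAT3} {h : ℕ}

lemma validVert_side {b : BlockAddr} (hb : validBlock φ h b) (s : Bool) :
    validVert φ h (side b s) := by
  rcases b with _ | ⟨⟨c, r⟩, b⟩
  · cases s <;> trivial
  · have hv : validBlock φ h b ∧ c ∈ φ.clauses := by
      obtain ⟨h1, h2⟩ := hb
      refine ⟨⟨?_, fun p hp => h2 p (List.mem_cons_of_mem _ hp)⟩, h2 (c, r) (by simp)⟩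
      simp only [List.length_cons] at h1
      omega
    cases s <;> exact hv

lemma validVert_gvec {b : BlockAddr} (hb : validBlock φ h b) {c : Clause3}
    (hc : c ∈ φ.clauses) (k : Fin 6) : validVert φ h (gvec b c k) := by
  have hx : ∀ x, c.hasVar x → x ∈ φ.vars := by
    intro x hx
    refine Finset.mem_biUnion.2 ⟨c, hc, ?_⟩
    simpa [Clause3.hasVar] using hx
  fin_cases k
  · exact ⟨hb, hx _ (Or.inl rfl)⟩
  · exact ⟨hb, hc, Or.inl rfl⟩
  · exact ⟨hb, hx _ (Or.inr (Or.inl rfl))⟩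
  · exact ⟨hb, hc, Or.inr (Or.inl rfl)⟩
  · exact ⟨hb, hx _ (Or.inr (Or.inr rfl))⟩
  · exact ⟨hb, hc, Or.inr (Or.inr rfl)⟩

lemma validVert_par (a : ℕ → Bool) {u : RVert} (hu : validVert φ h u) :
    validVert φ h (par a u) := by
  cases u with
  | var b x => exact validVert_side hu.1 _
  | varC b c x => exact validVert_side hu.1 _
  | q b c l => exact validVert_gvec hu.1 hu.2 _
  | _ => trivial

lemma pol_v1 (c : Clause3) : pol c c.v1 = c.p1 := by simp [pol]

lemma pol_v2 {c : Clause3} (hc : c ∈ φ.clauses) : pol c c.v2 = c.p2 := by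
  have := φ.distinct c hc
  simp [pol, this.1.symm]

lemma pol_v3 {c : Clause3} (hc : c ∈ φ.clauses) : pol c c.v3 = c.p3 := by
  have := φ.distinct c hc
  simp [pol, this.2.1.symm, this.2.2.symm]

lemma par_gvec (a : ℕ → Bool) (b : BlockAddr) (c : Clause3) (k : Fin 6) :
    ∃ s, par a (gvec b c k) = side b s := by
  fin_cases k <;> exact ⟨_, rfl⟩

/-- Edges of the tree are edges of `G`. -/
lemma baseAdj_par (a : ℕ → Bool) {u : RVert} (hu : validVert φ h u) (hne : u ≠ RVert.vv) :
    baseAdj u (par a u) ∨ baseAdj (par a u) u := by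
  cases u with
  | vv => exact absurd rfl hne
  | qp => simp [baseAdj, par]
  | pp => simp [baseAdj, par]
  | pm => simp [baseAdj, par]
  | qm => simp [baseAdj, par]
  | var b x =>
    refine Or.inl (Or.inr <| Or.inr <| Or.inr <| Or.inr <| Or.inl ⟨b, x, rfl, ?_⟩)
    cases hx : a x <;> simp [par, side, hx]
  | varC b c x =>
    refine Or.inl (Or.inr <| Or.inr <| Or.inr <| Or.inr <| Or.inr <| Or.inr ⟨b, c, ?_⟩)
    obtain ⟨-, hc, rfl | rfl | rfl⟩ := hu
    · exact Or.inl ⟨rfl, by rw [par, pol_v1, side]⟩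
    · exact Or.inr (Or.inl ⟨rfl, by rw [par, pol_v2 hc, side]⟩)
    · exact Or.inr (Or.inr ⟨rfl, by rw [par, pol_v3 hc, side]⟩)
  | q b c l =>
    exact Or.inr (Or.inr <| Or.inr <| Or.inr <| Or.inr <| Or.inr <| Or.inl
      ⟨b, c, _, l, Mmat_pick a c l, rfl, rfl⟩)

/-- The grandparent of `q_{l,c}^b` does not depend on `l`: the two candidate parents `x^b`, `x_c^b`
hang from the same attachment vertex, because `a` makes the literal of `x` in `c` true. -/
lemma par_par_q {a : ℕ → Bool} (ha : φ.satisfiedBy a) (b : BlockAddr) {c : Clause3}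
    (hc : c ∈ φ.clauses) (l : Fin 8) : par a (par a (RVert.q b c l)) = side b (sel a c) := by
  have h1 := pol_v1 c
  have h2 := pol_v2 hc
  have h3 := pol_v3 hc
  have hs := ha c hc
  unfold Clause3.satisfiedBy at hs
  simp only [par, pick, sel]
  split_ifs <;> simp_all [gvec]

lemma par_par_side {a : ℕ → Bool} (ha : φ.satisfiedBy a) {b : BlockAddr}
    (hb : validBlock φ h b) (s s' : Bool) :
    par a (par a (side b s)) = par a (par a (side b s')) := by
  rcases b with _ | ⟨⟨c, r⟩, b⟩
  · cases s <;> cases s' <;> rfl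
  · have hc : c ∈ φ.clauses := hb.2 (c, r) (by simp)
    have key : ∀ s, par a (par a (side ((c, r) :: b) s)) = side b (sel a c) := by
      intro s
      cases s <;> exact par_par_q ha b hc _
    rw [key, key]

/-! ### The spanner bound -/

/-- `par` as a self-map of the vertices of `reduction(φ, h)`. -/
def redPar (φ : SAT3) (h : ℕ) (a : ℕ → Bool) (u : RedVert φ h) : RedVert φ h :=
  ⟨par a u.1, validVert_par a u.2⟩

lemma depth_redPar (a : ℕ → Bool) (u : RedVert φ h) (hu : u ≠ centralVert φ h) :
    depth (redPar φ h a u).1 + 1 = depth u.1 :=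
  depth_par a fun e => hu (Subtype.ext e)

lemma dist_side_le {a : ℕ → Bool} (ha : φ.satisfiedBy a) {b : BlockAddr}
    (hb : validBlock φ h b) {u w : RedVert φ h} {s s' : Bool}
    (hu : u.1 = side b s) (hw : w.1 = side b s') :
    (parentGraph (redPar φ h a)).dist u w ≤ 4 := by
  refine parentGraph_dist_le_four (r := centralVert φ h) (D := fun u => depth u.1) rfl
    (depth_redPar a) (Subtype.ext ?_)
  change par a (par a u.1) = par a (par a w.1)
  rw [hu, hw]
  exact par_par_side ha hb s s'

lemma dist_le_seven_of_baseAdj {a : ℕ → Bool} (ha : φ.satisfiedBy a) (u w : RedVert φ h)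
    (e : baseAdj u.1 w.1) : (parentGraph (redPar φ h a)).dist u w ≤ 7 := by
  have tri := fun x y z => (parentGraph_connected (P := redPar φ h a) (r := centralVert φ h)
    (D := fun u => depth u.1) (depth_redPar a)).dist_triangle (u := x) (v := y) (w := z)
  have one := parentGraph_dist_le_one (P := redPar φ h a) (r := centralVert φ h)
    (D := fun u => depth u.1) rfl (depth_redPar a)
  have two := parentGraph_dist_le_two (P := redPar φ h a) (r := centralVert φ h)
    (D := fun u => depth u.1) rfl (depth_redPar a)
  have up : w.1 = par a u.1 → (parentGraph (redPar φ h a)).dist u w ≤ 7 := by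
    intro hw
    obtain rfl : w = redPar φ h a u := Subtype.ext hw
    exact (one u).trans (by norm_num)
  have down : u.1 = par a w.1 → (parentGraph (redPar φ h a)).dist u w ≤ 7 := by
    intro hu
    obtain rfl : u = redPar φ h a w := Subtype.ext hu
    rw [SimpleGraph.dist_comm]
    exact (one w).trans (by norm_num)
  rcases e with ⟨hu, hw⟩ | ⟨hu, hw⟩ | ⟨hu, hw⟩ | ⟨hu, hw⟩ | ⟨b, x, hu, hw⟩ |
    ⟨b, c, k, l, -, hu, hw⟩ | ⟨b, c, ⟨hu, hw⟩ | ⟨hu, hw⟩ | ⟨hu, hw⟩⟩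
  · exact up (by rw [hu, hw]; rfl)
  · exact up (by rw [hu, hw]; rfl)
  · exact down (by rw [hu, hw]; rfl)
  · exact down (by rw [hu, hw]; rfl)
  · have hv := u.2
    rw [hu] at hv
    have hs : ∃ s, w.1 = side b s := by
      rcases hw with hw | hw
      · exact ⟨true, hw⟩
      · exact ⟨false, hw⟩
    obtain ⟨s, hs⟩ := hs
    have h4 := dist_side_le ha hv.1 (u := redPar φ h a u) (w := w) (s := a x)
      (by simp only [redPar, hu, par]) hs
    have := tri u (redPar φ h a u) w
    have := one u
    omega
  · have hv := w.2
    rw [hw] at hv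
    obtain ⟨s, hs⟩ := par_gvec a b c k
    have h4 := dist_side_le ha hv.1 (u := redPar φ h a u)
      (w := redPar φ h a (redPar φ h a w)) (s := s) (s' := sel a c)
      (by simp only [redPar, hu, hs]) (by simp only [redPar, hw, par_par_q ha b hv.2])
    have h1 := tri u (redPar φ h a u) w
    have h2 := tri (redPar φ h a u) (redPar φ h a (redPar φ h a w)) w
    have h3 := one u
    have h5 := two w
    rw [SimpleGraph.dist_comm] at h5
    omega
  all_goals
    have hv := u.2
    rw [hu] at hv
    refine up ?_
    rw [hw, hu]
  · rw [par, pol_v1, side]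
  · rw [par, pol_v2 hv.2.1, side]
  · rw [par, pol_v3 hv.2.1, side]

end Valid

/-- For every satisfiable 3-SAT instance `φ` and every integer `h > 1`,
the graph `G = reduction(φ, h)` admits a tree 7-spanner `T` that is a breadth-first-search
tree of `G` rooted at the central vertex `v` of the initial path: every vertex `u ≠ v` of
`G` is adjacent in `T` to some vertex at `G`-distance `d_G(v, u) - 1` from `v`. -/
theorem reduction_admits_bfs_tree_7_spanner
    (φ : SAT3) (hsat : ∃ a : ℕ → Bool, φ.satisfiedBy a) (h : ℕ) (hh : 1 < h) :
    ∃ T : SimpleGraph (RedVert φ h),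
      IsTreeSpanner (reductionGraph φ h) T 7 ∧
      ∀ u : RedVert φ h, u ≠ centralVert φ h →
        ∃ w : RedVert φ h, T.Adj u w ∧
          (reductionGraph φ h).dist (centralVert φ h) w + 1 =
            (reductionGraph φ h).dist (centralVert φ h) u := by
  obtain ⟨a, ha⟩ := hsat
  have hle : parentGraph (redPar φ h a) ≤ reductionGraph φ h := by
    have key : ∀ u : RedVert φ h, u ≠ redPar φ h a u →
        (reductionGraph φ h).Adj u (redPar φ h a u) := by
      intro u hne
      refine (SimpleGraph.fromRel_adj _ _ _).2 ⟨fun e => hne (Subtype.ext e), ?_⟩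
      refine baseAdj_par a u.2 fun e => hne (Subtype.ext ?_)
      simp only [redPar, e, par]
    intro u w huw
    obtain ⟨hne, rfl | rfl⟩ := (SimpleGraph.fromRel_adj _ _ _).1 huw
    · exact key u hne
    · exact (key w hne.symm).symm
  have hdist := dist_eq_D (r := centralVert φ h) (D := fun u => depth u.1) hle rfl
    (depth_redPar a) (by
      intro u w huw
      have := (SimpleGraph.fromRel_adj _ _ _).1 huw
      rcases this.2 with e | e
      · have := depth_of_baseAdj e
        omega
      · have := depth_of_baseAdj e
        omega)
  refine ⟨parentGraph (redPar φ h a), ⟨hle, parentGraph_isTree (r := centralVert φ h)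
    (D := fun u => depth u.1) rfl (depth_redPar a), ?_⟩, ?_⟩
  · refine dist_le_of_adj (parentGraph_connected (r := centralVert φ h)
      (D := fun u => depth u.1) (depth_redPar a)) hle 7 ?_
    intro u w huw
    have := (SimpleGraph.fromRel_adj _ _ _).1 huw
    rcases this.2 with e | e
    · exact dist_le_seven_of_baseAdj ha u w e
    · rw [SimpleGraph.dist_comm]
      exact dist_le_seven_of_baseAdj ha w u e
  · intro u hu
    refine ⟨redPar φ h a u, parentGraph_adj (D := fun u => depth u.1) (depth_redPar a) hu, ?_⟩
    rw [hdist, hdist]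
    exact depth_redPar a u hu
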